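/- arXiv:1708.07209 — 2 statements merged into one kernel-verified Lean document; each statement's English description precedes it below -/
import Mathlib

section
/- Let A be a core synchronous transducer on X_n, synchronizing at level k, invertible, with every state a homeomorphism state, and let r ≥ k. If the graph of bad pairs G_r(A) contains a circuit, then the automaton semigroup generated by A is infinite. -/
/-!
The words `u ∈ Q^m` are the states of the power automaton `A^m`: reading a finite word `W` from `u`
outputs `iterW u W` and leads to the state `iterOuts u W`, so that `A_u (W y)` is
`iterW u W` followed by `A_{iterOuts u W} (y)` (`wordMap_app`). In particular the section of `A_u`
at `W` depends only on the map `A_u`.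

* `A^m` is synchronizing at level `m * k` (`iterOuts_sync`). If the semigroup were finite, only
  finitely many pairs `(A_u, A_u')` with `|u| = |u'|` would occur, so a single `K` would make the
  sections of `A_u` and `A_u'` at all words of length at least `K` agree, uniformly in `m`.
* A circuit of bad pairs contradicts this. If `{t, p}` is a top and `Γ` realises an edge to
  `{x, y}` by a split of length `l`, then reading `Γ` in a power of `A` from `(t, *, …)` and
  `(p, *, …)` leads to states agreeing in the first `l` places and having `x`, resp. `y`, in the
  next one. Since states permute letters, the continuation of the input can be chosen so that any
  prescribed word reaches place `l + 1`, and the next edge can be used there. Walking around the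
  circuit gives arbitrarily long words `W` and two states of some `A^m` that `W` takes to `c b` and
  `c b'` with `{b, b'}` again on the circuit (`exists_long`). The states of a bad pair act
  differently, since a split whose bottom depends only on its top must already show in the first
  output, and `A_c` is surjective, so `A_{c b} ≠ A_{c b'}`.
-/

/-- A synchronous transducer with alphabet `X` and state set `Q`:
`step x q` is the state reached after reading letter `x` at state `q`, and
`out x q` is the letter written. -/
structure Transducer (X : Type*) (Q : Type*) where
  step : X → Q → Q
  out : X → Q → X

namespace Transducer

variable {X Q R : Type*}

/-- The transition function extended to words (read left to right). -/
def stepW (T : Transducer X Q) : List X → Q → Q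
  | [], q => q
  | x :: w, q => T.stepW w (T.step x q)

/-- The output function extended to words. -/
def outW (T : Transducer X Q) : List X → Q → List X
  | [], _ => []
  | x :: w, q => T.out x q :: T.outW w (T.step x q)

theorem stepW_append (T : Transducer X Q) (u v : List X) (q : Q) :
    T.stepW (u ++ v) q = T.stepW v (T.stepW u q) := by
  induction u generalizing q with
  | nil => rfl
  | cons x u ih => simpa [stepW] using ih (T.step x q)

/-- `T` is synchronizing at level `k`: the state reached after reading any word of
length `k` is independent of the starting state. -/
def Synchronizing (T : Transducer X Q) (k : ℕ) : Prop :=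
  ∀ Γ : List X, Γ.length = k → ∀ p q : Q, T.stepW Γ p = T.stepW Γ q

/-- A state is in the core of `T` if it is forced by some nonempty word. -/
def InCore (T : Transducer X Q) (q : Q) : Prop :=
  ∃ Γ : List X, Γ ≠ [] ∧ ∀ p : Q, T.stepW Γ p = q

/-- `T` is core if every state is forced. -/
def IsCore (T : Transducer X Q) : Prop := ∀ q : Q, T.InCore q

/-- The map on one-sided infinite sequences induced by the state `q`. -/
def stateMap (T : Transducer X Q) (q : Q) (x : ℕ → X) : ℕ → X :=
  fun i => T.out (x i) (T.stepW ((List.range i).map x) q)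

/-- Every state of `T` is a homeomorphism state. -/
def AllHomeo (T : Transducer X Q) : Prop := ∀ q : Q, Function.Bijective (T.stateMap q)

/-- `T` is invertible: every state acts as a bijection on single letters. -/
def Invertible (T : Transducer X Q) : Prop :=
  ∀ q : Q, Function.Bijective fun x => T.out x q

/-- The map `f_T` on bi-infinite sequences induced by a transducer synchronizing at
level `k`; the letter at position `i` of the image is obtained by processing `x i`
from the state reached after reading `x (i-k), …, x (i-1)` starting at the basepoint
state `q0` (when `T` is synchronizing at level `k` this is the forced state, and the
map does not depend on the choice of `q0`). -/
def zmap (T : Transducer X Q) (k : ℕ) (q0 : Q) (x : ℤ → X) : ℤ → X :=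
  fun i => T.out (x i) (T.stepW ((List.range k).map fun j => x (i - (k : ℤ) + (j : ℤ))) q0)

/-- The composite map on one-sided sequences represented by a word of states,
applied leftmost letter first. -/
def wordMap (T : Transducer X Q) : List Q → (ℕ → X) → ℕ → X
  | [], x => x
  | q :: w, x => T.wordMap w (T.stateMap q x)

/-- A bi-infinite sequence is rational if it is eventually periodic in both directions. -/
def IsRational (z : ℤ → X) : Prop :=
  ∃ (N p q : ℕ), 0 < p ∧ 0 < q ∧
    (∀ i : ℤ, (N : ℤ) ≤ i → z (i + (p : ℤ)) = z i) ∧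
    (∀ i : ℤ, i ≤ -(N : ℤ) → z (i - (q : ℤ)) = z i)

/-- The inverse transducer of an invertible transducer. -/
noncomputable def invT (T : Transducer X Q) (hX : Nonempty X) : Transducer X Q where
  step := fun y q => T.step (@Function.invFun X X hX (fun x => T.out x q) y) q
  out := fun y q => @Function.invFun X X hX (fun x => T.out x q) y

/-- The product transducer `A*B`. -/
def prodT (T : Transducer X Q) (S : Transducer X R) : Transducer X (Q × R) where
  step := fun x pq => (T.step x pq.1, S.step (T.out x pq.1) pq.2)
  out := fun x pq => S.out (T.out x pq.1) pq.2

/-- The `m`-fold power `A^m`, with state set `Q^m`. -/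
def powT (T : Transducer X Q) : (m : ℕ) → Transducer X (Fin m → Q)
  | 0 => { step := fun _ u => u, out := fun x _ => x }
  | m + 1 =>
    { step := fun x u =>
        Fin.cons (T.step x (u 0)) ((T.powT m).step (T.out x (u 0)) fun i => u i.succ)
      out := fun x u => (T.powT m).out (T.out x (u 0)) fun i => u i.succ }

/-- The restriction of a transducer to its core. -/
def coreT (T : Transducer X Q) : Transducer X {q : Q // T.InCore q} where
  step := fun x q =>
    ⟨T.step x q.1, by
      obtain ⟨Γ, hΓ, h⟩ := q.2
      exact ⟨Γ ++ [x], by simp, fun p => by rw [T.stepW_append, h p]; rfl⟩⟩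
  out := fun x q => T.out x q.1

/-- `Γ_l^P`: the word obtained by passing `Γ` successively through the states in `P`. -/
def iterW (T : Transducer X Q) : List Q → List X → List X
  | [], Γ => Γ
  | p :: P, Γ => T.iterW P (T.outW Γ p)

/-- The list of states `out_i^P` reached when passing `Γ` successively through `P`. -/
def iterOuts (T : Transducer X Q) : List Q → List X → List Q
  | [], _ => []
  | p :: P, Γ => T.stepW Γ p :: T.iterOuts P (T.outW Γ p)

/-- `((t :: Tt), (p :: Tp), Γ)` is a split (forced states computed from the
basepoint state `q0`). -/
def SplitCond (T : Transducer X Q) (q0 : Q) (t p : Q) (Tt Tp : List Q) (Γ : List X) : Prop :=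
  Tt.length = Tp.length ∧
  T.iterOuts (t :: Tt) Γ = T.iterOuts (p :: Tp) Γ ∧
  (∀ i : ℕ, 1 ≤ i → i < (t :: Tt).length →
    T.stepW (T.iterW ((t :: Tt).take i) Γ) q0 = T.stepW (T.iterW ((p :: Tp).take i) Γ) q0) ∧
  T.stepW (T.iterW (t :: Tt) Γ) q0 ≠ T.stepW (T.iterW (p :: Tp) Γ) q0

/-- The bottom of the split `((t :: Tt), (p :: Tp), Γ)` depends only on its top. -/
def DependsOnTop (T : Transducer X Q) (q0 : Q) (t p : Q) (Tt Tp : List Q) (Γ : List X) : Prop :=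
  ∀ U U' : List Q, U.length = Tt.length → U'.length = Tp.length →
    T.iterOuts (t :: U) Γ = T.iterOuts (t :: Tt) Γ ∧
    T.iterOuts (p :: U') Γ = T.iterOuts (p :: Tp) Γ ∧
    T.stepW (T.iterW (t :: U) Γ) q0 = T.stepW (T.iterW (t :: Tt) Γ) q0 ∧
    T.stepW (T.iterW (p :: U') Γ) q0 = T.stepW (T.iterW (p :: Tp) Γ) q0

/-- The edge relation of the graph of bad pairs `G_r(T)` (on unordered pairs of
states, modelled as subsets of `Q`). -/
def BadEdge (T : Transducer X Q) (q0 : Q) (r : ℕ) (v w : Set Q) : Prop :=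
  ∃ (t p : Q) (Tt Tp : List Q) (Γ : List X), Γ.length = r ∧
    T.SplitCond q0 t p Tt Tp Γ ∧ T.DependsOnTop q0 t p Tt Tp Γ ∧
    v = {t, p} ∧
    w = {T.stepW (T.iterW (t :: Tt) Γ) q0, T.stepW (T.iterW (p :: Tp) Γ) q0}

/-- The `r` splitting length of `T`, as an extended natural number (`⊤` if no split
at level `r` exists). -/
noncomputable def splittingLength (T : Transducer X Q) (q0 : Q) (r : ℕ) : ℕ∞ :=
  sInf {L : ℕ∞ | ∃ (t p : Q) (Tt Tp : List Q) (Γ : List X),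
    Γ.length = r ∧ L = ((Tt.length + 1 : ℕ) : ℕ∞) ∧ T.SplitCond q0 t p Tt Tp Γ}

/-- The `i`-th rotation of a word. -/
def rotWord (i : ℕ) (Γ : List X) : List X :=
  Γ.drop (Γ.length - i) ++ Γ.take (Γ.length - i)

/-- A nonempty word is prime if it is not a proper power of a shorter word. -/
def IsPrimeWord (Γ : List X) : Prop :=
  Γ ≠ [] ∧ ∀ (δ : List X) (m : ℕ), 2 ≤ m → Γ ≠ (List.replicate m δ).flatten

/-- The length of the orbit of `Γ` under `f`. -/
noncomputable def orbitLen (f : List X → List X) (Γ : List X) : ℕ :=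
  (Set.range fun m : ℕ => f^[m] Γ).ncard

/-- The minimal `s ≥ 1` such that `f^[s] Γ` is a rotation of `Γ`
(for words of length `k`). -/
noncomputable def sigmaIdx (f : List X → List X) (k : ℕ) (Γ : List X) : ℕ :=
  sInf {s : ℕ | 1 ≤ s ∧ ∃ i < k, f^[s] Γ = rotWord i Γ}

/-- The rotation index attained at the minimal exponent `sigmaIdx`. -/
noncomputable def rhoIdx (f : List X → List X) (k : ℕ) (Γ : List X) : ℕ :=
  sInf {i : ℕ | i < k ∧ f^[sigmaIdx f k Γ] Γ = rotWord i Γ}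

end Transducer

namespace Transducer

variable {X Q : Type*}

/-! ### Prefixing finite words to sequences -/

/-- The sequence obtained by writing the finite word `W` in front of `y`. -/
def app : List X → (ℕ → X) → ℕ → X
  | [], y => y
  | a :: W, y => fun i => Nat.casesOn i a (app W y)

theorem app_inj {W W' : List X} (h : W.length = W'.length) {y y' : ℕ → X}
    (he : app W y = app W' y') : W = W' ∧ y = y' := by
  induction W generalizing W' with
  | nil =>
    cases W' with
    | nil => exact ⟨rfl, he⟩
    | cons => simp at h
  | cons a W ih =>
    cases W' with
    | nil => simp at h
    | cons a' W' =>
      have h0 : a = a' := congrFun he 0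
      obtain ⟨h1, h2⟩ := ih (W' := W') (by simpa using h) (funext fun i => congrFun he (i + 1))
      exact ⟨by rw [h0, h1], h2⟩

theorem outW_length (T : Transducer X Q) (W : List X) (q : Q) :
    (T.outW W q).length = W.length := by
  induction W generalizing q with
  | nil => rfl
  | cons a W ih => simp [outW, ih]

theorem outW_append (T : Transducer X Q) (u v : List X) (q : Q) :
    T.outW (u ++ v) q = T.outW u q ++ T.outW v (T.stepW u q) := by
  induction u generalizing q with
  | nil => rfl
  | cons x u ih => simpa [outW, stepW] using ih (T.step x q)

theorem iterW_length (T : Transducer X Q) (u : List Q) (W : List X) :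
    (T.iterW u W).length = W.length := by
  induction u generalizing W with
  | nil => rfl
  | cons q u ih => simp [iterW, ih, outW_length]

theorem iterOuts_length (T : Transducer X Q) (u : List Q) (W : List X) :
    (T.iterOuts u W).length = u.length := by
  induction u generalizing W with
  | nil => rfl
  | cons q u ih => simp [iterOuts, ih]

/-! ### Sections of products of states -/

theorem stateMap_app (T : Transducer X Q) (W : List X) (q : Q) (y : ℕ → X) :
    T.stateMap q (app W y) = app (T.outW W q) (T.stateMap (T.stepW W q) y) := by
  induction W generalizing q with
  | nil => rfl
  | cons a W ih =>
    funext i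
    cases i with
    | zero => rfl
    | succ i =>
      have h := congrFun (ih (T.step a q)) i
      simp only [stateMap, app, outW, stepW, List.range_succ_eq_map, List.map_cons,
        List.map_map] at h ⊢
      exact h

theorem wordMap_app (T : Transducer X Q) (u : List Q) (W : List X) (y : ℕ → X) :
    T.wordMap u (app W y) = app (T.iterW u W) (T.wordMap (T.iterOuts u W) y) := by
  induction u generalizing W y with
  | nil => rfl
  | cons q u ih => simp only [wordMap, iterW, iterOuts, stateMap_app, ih]

/-- The section at `W` of the map represented by a word of states depends only on that map. -/
theorem wordMap_iterOuts_congr (T : Transducer X Q) {u v : List Q}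
    (h : T.wordMap u = T.wordMap v) (W : List X) :
    T.wordMap (T.iterOuts u W) = T.wordMap (T.iterOuts v W) := by
  funext y
  have h1 := congrFun h (app W y)
  rw [wordMap_app, wordMap_app] at h1
  exact (app_inj (by simp [iterW_length]) h1).2

theorem wordMap_append (T : Transducer X Q) (u v : List Q) (y : ℕ → X) :
    T.wordMap (u ++ v) y = T.wordMap v (T.wordMap u y) := by
  induction u generalizing y with
  | nil => rfl
  | cons q u ih => simp [wordMap, ih]

theorem wordMap_surjective (T : Transducer X Q) (h : T.AllHomeo) (u : List Q) :
    Function.Surjective (T.wordMap u) := by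
  induction u with
  | nil => exact fun y => ⟨y, rfl⟩
  | cons q u ih => exact ih.comp (h q).2

theorem iterW_append (T : Transducer X Q) (u v : List Q) (W : List X) :
    T.iterW (u ++ v) W = T.iterW v (T.iterW u W) := by
  induction u generalizing W with
  | nil => rfl
  | cons q u ih => simp [iterW, ih]

theorem iterOuts_append (T : Transducer X Q) (u v : List Q) (W : List X) :
    T.iterOuts (u ++ v) W = T.iterOuts u W ++ T.iterOuts v (T.iterW u W) := by
  induction u generalizing W with
  | nil => rfl
  | cons q u ih => simp [iterOuts, iterW, ih]

theorem iterOuts_append_word (T : Transducer X Q) (u : List Q) (V W : List X) :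
    T.iterOuts u (V ++ W) = T.iterOuts (T.iterOuts u V) W := by
  induction u generalizing V W with
  | nil => rfl
  | cons q u ih => simp [iterOuts, outW_append, stepW_append, ih]

/-! ### Synchronization of powers -/

theorem Synchronizing.stepW_eq {T : Transducer X Q} {k : ℕ} (h : T.Synchronizing k)
    {W : List X} (hW : k ≤ W.length) (p q : Q) : T.stepW W p = T.stepW W q := by
  rw [← List.take_append_drop (W.length - k) W, stepW_append, stepW_append]
  exact h _ (by simp; omega) _ _

/-- The `m`-th power of a transducer synchronizing at level `k` is synchronizing at level
`m * k`. -/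
theorem iterOuts_sync {T : Transducer X Q} {k : ℕ} (h : T.Synchronizing k) (u u' : List Q)
    (hu : u.length = u'.length) (W : List X) (hW : u.length * k ≤ W.length) :
    T.iterOuts u W = T.iterOuts u' W := by
  induction u generalizing u' W with
  | nil =>
    cases u' with
    | nil => rfl
    | cons => simp at hu
  | cons q u ih =>
    cases u' with
    | nil => simp at hu
    | cons q' u' =>
      simp only [List.length_cons, Nat.succ_mul] at hW hu
      have hk : (W.take k).length = k := by simp; omega
      have hs := h _ hk q q'
      rw [← List.take_append_drop k W]
      simp only [iterOuts, outW_append, stepW_append, iterOuts_append_word, hs]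
      congr 1
      -- The outputs of the first `k` letters differ, but from then on both inputs coincide.
      have key : ∀ v v' : List Q, v.length = u.length → v'.length = u.length → ∀ V : List X,
          u.length * k ≤ V.length → T.iterOuts v V = T.iterOuts v' V := by
        intro v v' hv hv' V hV
        rw [← ih v hv.symm V hV, ← ih v' hv'.symm V hV]
      refine key _ _ (by simp [iterOuts_length]) (by simp [iterOuts_length]; omega) _ ?_
      simp [outW_length]; omega

/-! ### Following a circuit of bad pairs -/

theorem outW_surjective {T : Transducer X Q} (h : T.Invertible) (q : Q) (W : List X) :
    ∃ V, T.outW V q = W := by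
  induction W generalizing q with
  | nil => exact ⟨[], rfl⟩
  | cons a W ih =>
    obtain ⟨x, hx⟩ := (h q).2 a
    obtain ⟨V, hV⟩ := ih (T.step x q)
    exact ⟨x :: V, by simp only [outW, hV]; exact congrArg (· :: W) hx⟩

theorem iterW_surjective {T : Transducer X Q} (h : T.Invertible) (u : List Q) (W : List X) :
    ∃ V, T.iterW u V = W := by
  induction u generalizing W with
  | nil => exact ⟨W, rfl⟩
  | cons q u ih =>
    obtain ⟨V, hV⟩ := ih W
    obtain ⟨V', hV'⟩ := outW_surjective h q V
    exact ⟨V', by simp only [iterW, hV', hV]⟩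

/-- The two states of a bad pair with an outgoing edge induce different maps. -/
theorem BadEdge.stateMap_ne [Nonempty X] {T : Transducer X Q} {q0 : Q} {r : ℕ} {t p : Q}
    {w : Set Q} (h : T.BadEdge q0 r {t, p} w) : T.stateMap t ≠ T.stateMap p := by
  obtain ⟨t', p', Tt, Tp, Γ, -, ⟨hl, -, -, hne⟩, hdep, hv, -⟩ := h
  suffices H : T.stateMap t' ≠ T.stateMap p' by
    rcases Set.pair_eq_pair_iff.1 hv with ⟨rfl, rfl⟩ | ⟨rfl, rfl⟩
    · exact H
    · exact H.symm
  intro he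
  have h1 := congrFun he (app Γ fun _ => Classical.arbitrary X)
  rw [stateMap_app, stateMap_app] at h1
  have h2 := (app_inj (by simp [outW_length]) h1).1
  apply hne
  rw [← (hdep Tt Tt rfl hl).2.2.2]
  simp only [iterW, h2]

/-- Reading the word of an edge `{t, p} → {x, y}` from `(t, *, …)` and `(p, *, …)` leads to states
of the power automaton that begin with `c x` and `c y` for a common word `c`. -/
theorem BadEdge.step {T : Transducer X Q} {q0 : Q} {k r : ℕ} (hsync : T.Synchronizing k)
    (hkr : k ≤ r) {t p : Q} {w : Set Q} (h : T.BadEdge q0 r {t, p} w) :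
    ∃ (x y : Q) (c : List Q) (Γ : List X), w = {x, y} ∧ Γ ≠ [] ∧
      ∀ U V : List Q, U.length = c.length →
        (∃ V', V'.length = V.length ∧ T.iterOuts (t :: U ++ V) Γ = c ++ x :: V') ∧
        (∃ V', V'.length = V.length ∧ T.iterOuts (p :: U ++ V) Γ = c ++ y :: V') := by
  obtain ⟨t', p', Tt, Tp, Γ, hΓ, ⟨hl, houts, -, hne⟩, hdep, hv, hw⟩ := h
  have main : ∀ (s : Q) (Ts : List Q),
      (∀ U, U.length = Tt.length → T.iterOuts (s :: U) Γ = T.iterOuts (s :: Ts) Γ ∧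
        T.stepW (T.iterW (s :: U) Γ) q0 = T.stepW (T.iterW (s :: Ts) Γ) q0) →
      ∀ U V : List Q, U.length = Tt.length + 1 →
        ∃ V', V'.length = V.length ∧ T.iterOuts (s :: U ++ V) Γ =
          T.iterOuts (s :: Ts) Γ ++ T.stepW (T.iterW (s :: Ts) Γ) q0 :: V' := by
    intro s Ts hs U V hU
    obtain ⟨U, z, rfl⟩ : ∃ U' z, U = U' ++ [z] :=
      ⟨_, _, (List.dropLast_append_getLast (by rintro rfl; simp at hU)).symm⟩
    obtain ⟨h1, h2⟩ := hs U (by simpa using hU)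
    have hlen : k ≤ (T.iterW (s :: U) Γ).length := by rw [iterW_length]; omega
    refine ⟨T.iterOuts V (T.outW (T.iterW (s :: U) Γ) z), iterOuts_length .., ?_⟩
    have h3 : s :: (U ++ [z]) ++ V = (s :: U) ++ (z :: V) := by simp
    rw [h3, iterOuts_append, h1, ← h2, ← hsync.stepW_eq hlen z q0]
    rfl
  have ht := main t' Tt fun U hU =>
    ⟨(hdep U Tp hU rfl).1, (hdep U Tp hU rfl).2.2.1⟩
  have hp := main p' Tp fun U hU =>
    ⟨(hdep Tt U rfl (hU.trans hl)).2.1, (hdep Tt U rfl (hU.trans hl)).2.2.2⟩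
  rw [← houts] at hp
  have hc : (T.iterOuts (t' :: Tt) Γ).length = Tt.length + 1 := by simp [iterOuts_length]
  have hΓne : Γ ≠ [] := by
    -- An empty `Γ` forces `k = 0`, so that there is only one state.
    rintro rfl
    exact hne (hsync.stepW_eq (W := []) (by simp at hΓ ⊢; omega) _ _)
  rcases Set.pair_eq_pair_iff.1 hv with ⟨rfl, rfl⟩ | ⟨rfl, rfl⟩
  · exact ⟨_, _, _, Γ, hw, hΓne, fun U V hU => ⟨ht U V (hU.trans hc), hp U V (hU.trans hc)⟩⟩
  · exact ⟨_, _, _, Γ, hw.trans (Set.pair_comm _ _), hΓne,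
      fun U V hU => ⟨hp U V (hU.trans hc), ht U V (hU.trans hc)⟩⟩

/-- From a vertex `{t, p}` on a circuit of bad pairs, arbitrarily long words `W` lead, in a suitable
power, from `(t, *, …)` and `(p, *, …)` to states `c b` and `c b'` with `{b, b'}` on a circuit. -/
theorem exists_long {T : Transducer X Q} {q0 : Q} {k r : ℕ} (hsync : T.Synchronizing k)
    (hinv : T.Invertible) (hkr : k ≤ r) (j : ℕ) (t p : Q)
    (h : Relation.TransGen (T.BadEdge q0 r) {t, p} {t, p}) :
    ∃ (b b' : Q) (c : List Q) (W : List X), j ≤ W.length ∧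
      Relation.TransGen (T.BadEdge q0 r) {b, b'} {b, b'} ∧
      ∀ U : List Q, U.length = c.length →
        T.iterOuts (t :: U) W = c ++ [b] ∧ T.iterOuts (p :: U) W = c ++ [b'] := by
  induction j generalizing t p with
  | zero =>
    refine ⟨t, p, [], [], by simp, h, fun U hU => ?_⟩
    obtain rfl : U = [] := by simpa using hU
    exact ⟨rfl, rfl⟩
  | succ j ih =>
    obtain ⟨w, hvw, hwv⟩ := Relation.TransGen.head'_iff.1 h
    have hww := Relation.TransGen.tail' hwv hvw
    obtain ⟨x, y, c₀, Γ, rfl, hΓ, hstep⟩ := hvw.step hsync hkr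
    obtain ⟨b, b', c, W, hW, hb, hc⟩ := ih x y hww
    -- `Δ` is the input whose image under the states `c₀` is `W`.
    obtain ⟨Δ, hΔ⟩ := iterW_surjective hinv c₀ W
    have hΔl : Δ.length = W.length := by rw [← hΔ, iterW_length]
    refine ⟨b, b', T.iterOuts c₀ Δ ++ c, Γ ++ Δ, ?_, hb, fun U hU => ?_⟩
    · have := List.length_pos_iff.2 hΓ
      simp only [List.length_append]; omega
    · simp only [List.length_append, iterOuts_length] at hU
      have hsplit := hstep (U.take c₀.length) (U.drop c₀.length) (by simp; omega)
      simp only [List.cons_append, List.take_append_drop] at hsplit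
      obtain ⟨⟨V, hV, h1⟩, ⟨V', hV', h2⟩⟩ := hsplit
      have e1 := (hc V (by rw [hV]; simp; omega)).1
      have e2 := (hc V' (by rw [hV']; simp; omega)).2
      constructor
      · rw [iterOuts_append_word, h1, iterOuts_append, hΔ, e1, List.append_assoc]
      · rw [iterOuts_append_word, h2, iterOuts_append, hΔ, e2, List.append_assoc]

theorem BadEdge.exists_pair {T : Transducer X Q} {q0 : Q} {r : ℕ} {v w : Set Q}
    (h : T.BadEdge q0 r v w) : ∃ t p, v = {t, p} := by
  obtain ⟨t, p, _, _, _, _, _, _, hv, _⟩ := h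
  exact ⟨t, p, hv⟩

end Transducer

/-- Let `A` be a core synchronous transducer on `X_n`, synchronizing at
level `k`, invertible, with every state a homeomorphism state, and let `r ≥ k`.  If the
graph of bad pairs `G_r(A)` contains a circuit, then the automaton semigroup generated
by `A` (the set of all maps `A_w` for nonempty words `w` over `Q_A`) is infinite. -/
theorem badPairs_circuit_implies_automaton_semigroup_infinite
    (n : ℕ) (hn : 2 ≤ n) {Q : Type*} [Fintype Q]
    (A : Transducer (Fin n) Q) (k r : ℕ) (q0 : Q)
    (hcore : A.IsCore) (hsync : A.Synchronizing k)
    (hinv : A.Invertible) (hhomeo : A.AllHomeo)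
    (hkr : k ≤ r)
    (hcirc : ∃ v : Set Q, Relation.TransGen (A.BadEdge q0 r) v v) :
    Set.Infinite {f : (ℕ → Fin n) → ℕ → Fin n | ∃ w : List Q, w ≠ [] ∧ f = A.wordMap w} := by
  intro hfin
  have : Nonempty (Fin n) := ⟨⟨0, by omega⟩⟩
  obtain ⟨v, hv⟩ := hcirc
  obtain ⟨t, p, rfl⟩ : ∃ t p, v = {t, p} := by
    obtain ⟨w, hvw, -⟩ := Relation.TransGen.head'_iff.1 hv
    exact hvw.exists_pair
  have key : ∀ j : ℕ, ∃ (u u' : List Q) (W : List (Fin n)), u ≠ [] ∧ u' ≠ [] ∧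
      u.length = u'.length ∧ j ≤ W.length ∧
      A.wordMap (A.iterOuts u W) ≠ A.wordMap (A.iterOuts u' W) := by
    intro j
    obtain ⟨b, b', c, W, hW, hb, hc⟩ := Transducer.exists_long hsync hinv hkr j t p hv
    obtain ⟨h1, h2⟩ := hc (List.replicate c.length q0) (by simp)
    refine ⟨t :: List.replicate c.length q0, p :: List.replicate c.length q0, W,
      List.cons_ne_nil _ _, List.cons_ne_nil _ _, rfl, hW, ?_⟩
    rw [h1, h2]
    intro he
    obtain ⟨w, hbw, -⟩ := Relation.TransGen.head'_iff.1 hb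
    apply hbw.stateMap_ne
    funext y
    obtain ⟨z, rfl⟩ := A.wordMap_surjective hhomeo c y
    simpa [Transducer.wordMap_append, Transducer.wordMap] using congrFun he z
  choose u u' W hu hu' hlen hW hne using key
  have := hfin.to_subtype
  -- Some pair of maps arises from `(u j, u' j)` for infinitely many `j`.
  obtain ⟨fg, hfg⟩ := Finite.exists_infinite_fiber
    (fun j => ((⟨_, u j, hu j, rfl⟩, ⟨_, u' j, hu' j, rfl⟩) :
      {f : (ℕ → Fin n) → ℕ → Fin n | ∃ w : List Q, w ≠ [] ∧ f = A.wordMap w} ×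
      {f : (ℕ → Fin n) → ℕ → Fin n | ∃ w : List Q, w ≠ [] ∧ f = A.wordMap w}))
  rw [Set.infinite_coe_iff] at hfg
  obtain ⟨i, hi⟩ := hfg.nonempty
  obtain ⟨j, hj, hij⟩ := hfg.exists_gt ((u i).length * k)
  have hijeq := hj.trans hi.symm
  simp only [Prod.mk.injEq, Subtype.mk.injEq] at hijeq
  apply hne j
  rw [A.wordMap_iterOuts_congr hijeq.1, A.wordMap_iterOuts_congr hijeq.2,
    Transducer.iterOuts_sync hsync _ _ (hlen i) (W j) (hij.le.trans (hW j))]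
end

section
/- Let A, B, J be core synchronous transducers on X_n, each synchronizing at some level, such that f_A, f_B and f_J are bijections of X_n^ℤ and f_J ∘ f_A = f_B ∘ f_J. Fix k ≥ 1 and assume (as holds automatically in this situation) that \overline{A}_k and \overline{B}_k are bijections of X_n^k under which the orbit of every prime word consists of prime words. For a prime word Γ ∈ X_n^k let L_A(Γ) be the size of the \overline{A}_k-orbit of Γ, let σ_A(Γ) ≥ 1 be minimal such that \overline{A}_k^{σ_A(Γ)}(Γ) is a rotation of Γ, and let ρ_A(Γ) be the unique index 0 ≤ i < k such that \overline{A}_k^{σ_A(Γ)}(Γ) is the i-th rotation of Γ; define L_B, σ_B, ρ_B likewise. Then the multiset {(L_A(Γ), σ_A(Γ), ρ_A(Γ)) : Γ ∈ X_n^k prime} equals the multiset {(L_B(Γ), σ_B(Γ), ρ_B(Γ)) : Γ ∈ X_n^k prime}. -/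
namespace Transducer

/-! ### Words and periodic sequences -/

/-- The `k`-periodic bi-infinite sequence `Γ^∞` attached to a word `Γ` of length `k`, with `Γ`
written at positions `0, …, k-1`. The letter `d` is a default value, never used when
`Γ.length = k` and `0 < k`. -/
def perSeq (d : X) (k : ℕ) (Γ : List X) (i : ℤ) : X :=
  Γ.getD (i % (k : ℤ)).toNat d

/-- The word read by the sequence `x` at positions `0, …, k-1`. -/
def window (k : ℕ) (x : ℤ → X) : List X :=
  (List.range k).map fun j : ℕ => x (j : ℤ)

@[simp] theorem length_window (k : ℕ) (x : ℤ → X) : (window k x).length = k := by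
  simp [window]

theorem periodic_perSeq (d : X) (k : ℕ) (Γ : List X) :
    Function.Periodic (perSeq d k Γ) (k : ℤ) := by
  intro i
  simp [perSeq]

theorem perSeq_window (d : X) {k : ℕ} (hk : 0 < k) {x : ℤ → X}
    (hx : Function.Periodic x (k : ℤ)) : perSeq d k (window k x) = x := by
  funext i
  have h0 : 0 ≤ i % (k : ℤ) := Int.emod_nonneg _ (by omega)
  have h1 : i % (k : ℤ) < k := Int.emod_lt_of_pos _ (by omega)
  have h2 : (i % (k : ℤ)).toNat < (window k x).length := by
    rw [length_window]; omega
  unfold perSeq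
  rw [List.getD_eq_getElem _ _ h2]
  simp only [window, List.getElem_map, List.getElem_range]
  rw [Int.toNat_of_nonneg h0, Int.emod_def, mul_comm]
  exact hx.sub_int_mul_eq (i / (k : ℤ))

theorem window_perSeq (d : X) {k : ℕ} {Γ : List X} (hΓ : Γ.length = k) :
    window k (perSeq d k Γ) = Γ := by
  refine List.ext_getElem (by simp [hΓ]) fun j h1 h2 => ?_
  have hj : ((j : ℤ) % (k : ℤ)).toNat = j := by
    rw [Int.emod_eq_of_lt (by omega) (by omega)]; simp
  simp only [window, List.getElem_map, List.getElem_range, perSeq, hj]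
  exact List.getD_eq_getElem _ _ h2

theorem window_add (a b : ℕ) (x : ℤ → X) :
    window (a + b) x = window a x ++ window b fun i => x (i + a) := by
  simp [window, List.range_add, Function.comp_def, add_comm]

/-- Rotating a word amounts to shifting its periodic sequence. -/
theorem rotWord_eq (d : X) {k : ℕ} {Γ : List X} (hΓ : Γ.length = k) {i : ℕ} (hi : i < k) :
    rotWord i Γ = window k fun j => perSeq d k Γ (j - i) := by
  refine List.ext_getElem (by simp [rotWord, hΓ]) fun j h1 h2 => ?_
  rw [length_window] at h2
  simp only [window, List.getElem_map, List.getElem_range, perSeq, rotWord, hΓ]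
  by_cases hji : j < i
  · have hm : (((j : ℤ) - i) % (k : ℤ)).toNat = k - i + j := by
      rw [← Int.add_emod_right, Int.emod_eq_of_lt (by omega) (by omega)]; omega
    rw [hm, List.getElem_append_left (by simp; omega), List.getElem_drop]
    exact (List.getD_eq_getElem _ _ (by omega)).symm
  · have hm : (((j : ℤ) - i) % (k : ℤ)).toNat = j - i := by
      rw [Int.emod_eq_of_lt (by omega) (by omega)]; omega
    rw [hm, List.getElem_append_right (by simp; omega), List.getElem_take]
    rw [List.getD_eq_getElem _ _ (by omega)]
    congr 1
    simp
    omega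

/-- A window spanning `m` periods is an `m`-th power. -/
theorem window_mul {g : ℕ} {x : ℤ → X} (hx : Function.Periodic x (g : ℤ)) (m : ℕ) :
    window (m * g) x = (List.replicate m (window g x)).flatten := by
  induction m with
  | zero => simp [window]
  | succ m ih =>
    have hs : (fun i => x (i + g)) = x := funext hx
    rw [Nat.succ_mul, Nat.add_comm, window_add, hs, ih, List.replicate_succ, List.flatten_cons]

/-- A word of length `k` is prime iff `k` is the least period of its periodic sequence. -/
theorem isPrimeWord_iff (d : X) {k : ℕ} (hk : 0 < k) {Γ : List X} (hΓ : Γ.length = k) :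
    IsPrimeWord Γ ↔
      ∀ p : ℕ, 0 < p → Function.Periodic (perSeq d k Γ) (p : ℤ) → k ≤ p := by
  constructor
  · rintro ⟨-, hprime⟩ p hp hper
    by_contra! hlt
    -- The sequence also has period `gcd p k`, a proper divisor of `k`.
    have hg : Function.Periodic (perSeq d k Γ) ((Nat.gcd p k : ℕ) : ℤ) := by
      rw [Nat.gcd_eq_gcd_ab, mul_comm (p : ℤ), mul_comm (k : ℤ)]
      exact (hper.int_mul _).add_period ((periodic_perSeq d k Γ).int_mul _)
    obtain ⟨m, hm⟩ := Nat.gcd_dvd_right p k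
    have hgp : Nat.gcd p k ≤ p := Nat.gcd_le_left _ hp
    have hm2 : 2 ≤ m := by
      by_contra! hm2
      have : p.gcd k * m ≤ p.gcd k * 1 := Nat.mul_le_mul_left _ (by omega)
      omega
    refine hprime (window (p.gcd k) (perSeq d k Γ)) m hm2 ?_
    rw [← window_mul hg, mul_comm, ← hm, window_perSeq d hΓ]
  · intro h
    refine ⟨by rintro rfl; simp at hΓ; omega, fun δ m hm hδ => ?_⟩
    have hlen : k = m * δ.length := by rw [← hΓ, hδ]; simp
    have hpos : 0 < δ.length := by
      rcases Nat.eq_zero_or_pos δ.length with h0 | h0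
      · rw [h0] at hlen; omega
      · exact h0
    have hperδ := periodic_perSeq d δ.length δ
    have hw : Γ = window k (perSeq d δ.length δ) := by
      rw [hlen, window_mul hperδ, window_perSeq d rfl, hδ]
    have hk' : Function.Periodic (perSeq d δ.length δ) (k : ℤ) := by
      rw [hlen]; push_cast; exact hperδ.int_mul _
    have := h δ.length hpos (by rw [hw, perSeq_window d hk hk']; exact hperδ)
    nlinarith

/-! ### The map induced on periodic sequences -/

theorem outW_getD (T : Transducer X Q) (d : X) (Γ : List X) (q : Q) (j : ℕ)
    (hj : j < Γ.length) :
    (T.outW Γ q).getD j d = T.out (Γ.getD j d) (T.stepW (Γ.take j) q) := by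
  induction Γ generalizing q j with
  | nil => simp at hj
  | cons x Γ ih =>
    cases j with
    | zero => simp [outW, stepW]
    | succ j => simpa [outW, stepW] using ih (T.step x q) j (by simpa using hj)

/-- In the definition of `zmap` the index list `List.range k` is coerced to a list of integers;
here the indices are natural numbers. -/
theorem zmap_apply (T : Transducer X Q) (k : ℕ) (q0 : Q) (x : ℤ → X) (i : ℤ) :
    T.zmap k q0 x i = T.out (x i)
      (T.stepW ((List.range k).map fun j : ℕ => x (i - (k : ℤ) + (j : ℤ))) q0) := by
  simp [zmap, ← List.map_eq_flatMap, Function.comp_def]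

/-- The recursion along a bi-infinite run `st`, iterated over `m` letters. -/
theorem stepW_window_run (T : Transducer X Q) (x : ℤ → X) (st : ℤ → Q)
    (hst : ∀ i, st (i + 1) = T.step (x i) (st i)) (m : ℕ) (i : ℤ) :
    T.stepW ((List.range m).map fun j : ℕ => x (i + (j : ℤ))) (st i) = st (i + m) := by
  induction m with
  | zero => simp [stepW]
  | succ m ih =>
    rw [List.range_succ, List.map_append, stepW_append, ih]
    simp [stepW, ← hst, add_assoc]

/-- If `st` is a bi-infinite run of a synchronizing transducer on the input `x`, the states of this
run are the forced ones, so `f_T(x)` is the output of the run. -/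
theorem zmap_eq_of_run (T : Transducer X Q) {k : ℕ} (hT : T.Synchronizing k) (q0 : Q)
    (x : ℤ → X) (st : ℤ → Q) (hst : ∀ i, st (i + 1) = T.step (x i) (st i)) (i : ℤ) :
    T.zmap k q0 x i = T.out (x i) (st i) := by
  rw [zmap_apply, hT _ (by simp) q0 (st (i - k)), stepW_window_run T x st hst]
  simp

/-- On `k`-periodic sequences `f_T` is given by `\overline{T}_k`. -/
theorem zmap_perSeq (T : Transducer X Q) {l : ℕ} (hT : T.Synchronizing l) (q0 : Q)
    (d : X) {k : ℕ} (hk : 0 < k) {Γ : List X} (hΓ : Γ.length = k) {q : Q}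
    (hq : T.stepW Γ q = q) :
    T.zmap l q0 (perSeq d k Γ) = perSeq d k (T.outW Γ q) := by
  have hmod (i : ℤ) : 0 ≤ i % (k : ℤ) ∧ i % (k : ℤ) < k :=
    ⟨Int.emod_nonneg _ (by omega), Int.emod_lt_of_pos _ (by omega)⟩
  funext i
  -- The run loops from `q` back to `q` each time it reads `Γ`.
  rw [zmap_eq_of_run T hT q0 _ fun i => T.stepW (Γ.take (i % (k : ℤ)).toNat) q]
  · have := hmod i
    exact (outW_getD T d Γ q _ (by omega)).symm
  · intro i
    have hi := hmod i
    have hlt : (i % (k : ℤ)).toNat < Γ.length := by omega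
    have hstep : T.step (perSeq d k Γ i) (T.stepW (Γ.take (i % (k : ℤ)).toNat) q)
        = T.stepW (Γ.take ((i % (k : ℤ)).toNat + 1)) q := by
      rw [List.take_succ_eq_append_getElem hlt, stepW_append, perSeq,
        List.getD_eq_getElem _ _ hlt]
      rfl
    rw [hstep]
    have hsucc : (i + 1) % (k : ℤ) = (i % (k : ℤ) + 1) % (k : ℤ) := by simp
    by_cases hc : i % (k : ℤ) + 1 < k
    · rw [hsucc, Int.emod_eq_of_lt (by omega) hc]
      congr 2
      omega
    · have he : i % (k : ℤ) + 1 = k := by omega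
      have hn : (i % (k : ℤ)).toNat + 1 = Γ.length := by omega
      rw [hsucc, he, hn, Int.emod_self, List.take_length, hq]
      rfl

theorem zmap_shift (T : Transducer X Q) (l : ℕ) (q0 : Q) (x : ℤ → X) (c : ℤ) :
    T.zmap l q0 (fun i => x (i + c)) = fun i => T.zmap l q0 x (i + c) := by
  funext i
  have h (j : ℕ) : i - (l : ℤ) + j + c = i + c - l + j := by ring
  simp only [zmap_apply, h]

/-- An injective map commuting with the shift preserves and reflects periods. -/
theorem periodic_map_iff {F : (ℤ → X) → ℤ → X} (hF : Function.Injective F)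
    (hshift : ∀ x c, F (fun i => x (i + c)) = fun i => F x (i + c)) (x : ℤ → X) (c : ℤ) :
    Function.Periodic (F x) c ↔ Function.Periodic x c := by
  have h (y : ℤ → X) : Function.Periodic y c ↔ (fun i => y (i + c)) = y := by
    rw [funext_iff]; rfl
  rw [h, h, ← hshift, hF.eq_iff]

end Transducer

/-! ### Invariance of the spectrum -/

open Transducer

/-- The spectrum at level `k` is a conjugacy invariant: if `J` conjugates
`A` to `B` (all inducing bijections of `X_n^ℤ`), then the multisets of triples
`(orbit length, minimal rotation exponent, rotation index)` of the prime words of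
length `k` under `\overline{A}_k` and `\overline{B}_k` coincide (witnessed by a
bijection of the set of prime words of length `k` matching the triples). -/
theorem spectrum_is_conjugacy_invariant
    (n : ℕ) (hn : 2 ≤ n) {QA QB QJ : Type*} [Fintype QA] [Fintype QB] [Fintype QJ]
    (A : Transducer (Fin n) QA) (B : Transducer (Fin n) QB) (J : Transducer (Fin n) QJ)
    (kA kB kJ : ℕ)
    (hAcore : A.IsCore) (hBcore : B.IsCore) (hJcore : J.IsCore)
    (hAsync : A.Synchronizing kA) (hBsync : B.Synchronizing kB) (hJsync : J.Synchronizing kJ)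
    (a0 : QA) (b0 : QB) (j0 : QJ)
    (hAbij : Function.Bijective (A.zmap kA a0))
    (hBbij : Function.Bijective (B.zmap kB b0))
    (hJbij : Function.Bijective (J.zmap kJ j0))
    (hconj : J.zmap kJ j0 ∘ A.zmap kA a0 = B.zmap kB b0 ∘ J.zmap kJ j0)
    (k : ℕ) (hk : 1 ≤ k)
    (barA barB : List (Fin n) → List (Fin n))
    (hbarA : ∀ Γ : List (Fin n), Γ ≠ [] →
      ∃ q : QA, A.stepW Γ q = q ∧ barA Γ = A.outW Γ q)
    (hbarB : ∀ Γ : List (Fin n), Γ ≠ [] →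
      ∃ q : QB, B.stepW Γ q = q ∧ barB Γ = B.outW Γ q)
    (hbijA : Set.BijOn barA {Γ | Γ.length = k} {Γ | Γ.length = k})
    (hbijB : Set.BijOn barB {Γ | Γ.length = k} {Γ | Γ.length = k})
    (hprimeA : ∀ Γ : List (Fin n), Γ.length = k → Transducer.IsPrimeWord Γ →
      ∀ m : ℕ, Transducer.IsPrimeWord (barA^[m] Γ))
    (hprimeB : ∀ Γ : List (Fin n), Γ.length = k → Transducer.IsPrimeWord Γ →
      ∀ m : ℕ, Transducer.IsPrimeWord (barB^[m] Γ)) :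
    ∃ φ : List (Fin n) → List (Fin n),
      Set.BijOn φ {Γ | Γ.length = k ∧ Transducer.IsPrimeWord Γ}
        {Γ | Γ.length = k ∧ Transducer.IsPrimeWord Γ} ∧
      ∀ Γ : List (Fin n), Γ.length = k → Transducer.IsPrimeWord Γ →
        Transducer.orbitLen barB (φ Γ) = Transducer.orbitLen barA Γ ∧
        Transducer.sigmaIdx barB k (φ Γ) = Transducer.sigmaIdx barA k Γ ∧
        Transducer.rhoIdx barB k (φ Γ) = Transducer.rhoIdx barA k Γ := by
  have hk0 : 0 < k := hk
  let d : Fin n := ⟨0, by omega⟩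
  have hne {Γ : List (Fin n)} (h : Γ.length = k) : Γ ≠ [] := by
    rintro rfl; simp at h; omega
  set F := J.zmap kJ j0 with hFdef
  have hshift : ∀ x c, F (fun i => x (i + c)) = fun i => F x (i + c) := zmap_shift J kJ j0
  have hper := periodic_map_iff hJbij.injective hshift
  have hA {Γ : List (Fin n)} (h : Γ.length = k) :
      A.zmap kA a0 (perSeq d k Γ) = perSeq d k (barA Γ) := by
    obtain ⟨q, hq, hb⟩ := hbarA Γ (hne h)
    rw [hb]; exact zmap_perSeq A hAsync a0 d hk0 h hq
  have hB {Γ : List (Fin n)} (h : Γ.length = k) :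
      B.zmap kB b0 (perSeq d k Γ) = perSeq d k (barB Γ) := by
    obtain ⟨q, hq, hb⟩ := hbarB Γ (hne h)
    rw [hb]; exact zmap_perSeq B hBsync b0 d hk0 h hq
  -- `φ` is the map induced by `f_J` on words of length `k`, that is, `\overline{J}_k`.
  let φ : List (Fin n) → List (Fin n) := fun Γ => window k (F (perSeq d k Γ))
  have hφlen (Γ) : (φ Γ).length = k := length_window _ _
  have hφper (Γ) : perSeq d k (φ Γ) = F (perSeq d k Γ) :=
    perSeq_window d hk0 ((hper _ _).2 (periodic_perSeq d k Γ))
  have hinj {Γ Δ : List (Fin n)} (h : Γ.length = k) (h' : Δ.length = k)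
      (he : perSeq d k Γ = perSeq d k Δ) : Γ = Δ := by
    rw [← window_perSeq d h, he, window_perSeq d h']
  have hφinj : Set.InjOn φ {Γ | Γ.length = k} := by
    intro Γ h Δ h' he
    refine hinj h h' (hJbij.injective ?_)
    rw [← hφper, ← hφper, he]
  have hφprime {Γ : List (Fin n)} (h : Γ.length = k) :
      IsPrimeWord (φ Γ) ↔ IsPrimeWord Γ := by
    simp only [isPrimeWord_iff d hk0 h, isPrimeWord_iff d hk0 (hφlen Γ), hφper, hper]
  have hφrot {Γ : List (Fin n)} (h : Γ.length = k) {i : ℕ} (hi : i < k) :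
      φ (rotWord i Γ) = rotWord i (φ Γ) := by
    rw [rotWord_eq d h hi, rotWord_eq d (hφlen Γ) hi, hφper]
    simp only [sub_eq_add_neg, φ]
    rw [perSeq_window d hk0, hshift]
    intro j
    simpa only [add_right_comm] using periodic_perSeq d k Γ (j + -(i : ℤ))
  have hφbar {Γ : List (Fin n)} (h : Γ.length = k) : φ (barA Γ) = barB (φ Γ) := by
    refine hinj (hφlen _) (hbijB.mapsTo (hφlen Γ)) ?_
    rw [hφper, ← hA h, ← hB (hφlen Γ), hφper]
    exact congrFun hconj _
  have hAlen {Γ : List (Fin n)} (h : Γ.length = k) (s : ℕ) : (barA^[s] Γ).length = k :=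
    hbijA.mapsTo.iterate s h
  have hφiter {Γ : List (Fin n)} (h : Γ.length = k) (s : ℕ) :
      barB^[s] (φ Γ) = φ (barA^[s] Γ) := by
    induction s with
    | zero => rfl
    | succ s ih =>
      rw [Function.iterate_succ_apply', Function.iterate_succ_apply', ih, hφbar (hAlen h s)]
  have hrotlen {Γ : List (Fin n)} (h : Γ.length = k) (i : ℕ) : (rotWord i Γ).length = k := by
    simp [rotWord, h]
  -- `σ` and `ρ` are read off from the solutions `(s, i)` of this equation, the same for `A` and `B`.
  have hiff {Γ : List (Fin n)} (h : Γ.length = k) (s : ℕ) {i : ℕ} (hi : i < k) :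
      barB^[s] (φ Γ) = rotWord i (φ Γ) ↔ barA^[s] Γ = rotWord i Γ := by
    rw [hφiter h, ← hφrot h hi]
    exact hφinj.eq_iff (hAlen h s) (hrotlen h i)
  refine ⟨φ, ⟨?_, ?_, ?_⟩, ?_⟩
  · rintro Γ ⟨h, hp⟩
    exact ⟨hφlen Γ, (hφprime h).2 hp⟩
  · exact hφinj.mono fun Γ h => h.1
  · rintro Δ ⟨h, hp⟩
    -- The preimage of `Δ^∞` under `f_J` is again `k`-periodic, so its window is the preimage of `Δ`.
    obtain ⟨x, hx⟩ := hJbij.surjective (perSeq d k Δ)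
    have hxper : Function.Periodic x (k : ℤ) := by
      rw [← hper, hx]; exact periodic_perSeq d k Δ
    have he : φ (window k x) = Δ := by
      simp only [φ]
      rw [perSeq_window d hk0 hxper, hx, window_perSeq d h]
    exact ⟨window k x, ⟨length_window _ _, by rwa [← hφprime (length_window _ _), he]⟩, he⟩
  · intro Γ h _
    have hσ : sigmaIdx barB k (φ Γ) = sigmaIdx barA k Γ := by
      unfold sigmaIdx
      congr 1
      ext s
      exact and_congr_right fun _ => exists_congr fun i => and_congr_right fun hi => hiff h s hi
    refine ⟨?_, hσ, ?_⟩
    · unfold orbitLen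
      have hr : (Set.range fun m : ℕ => barB^[m] (φ Γ))
          = φ '' Set.range fun m : ℕ => barA^[m] Γ := by
        rw [← Set.range_comp]
        exact congrArg Set.range (funext fun m => hφiter h m)
      rw [hr]
      refine Set.InjOn.ncard_image (hφinj.mono ?_)
      rintro _ ⟨m, rfl⟩
      exact hAlen h m
    · unfold rhoIdx
      rw [hσ]
      congr 1
      ext i
      exact and_congr_right fun hi => hiff h _ hi
end
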